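/- arXiv:2008.11968 — 2 statements merged into one kernel-verified Lean document; each statement's English description precedes it below -/
import Mathlib

section
/- Let k be a field of characteristic zero. For each of the seven ideals I_1 = (x_0, x_1^3, x_1^2x_2^2, x_1^2x_2x_3^2, x_1^2x_2x_3x_4^2), I_2 = (x_0, x_1^3, x_1^2x_2x_3x_4, x_1^2x_2^2x_4, x_1^2x_2x_3^2, x_1^2x_2^2x_3, x_1^2x_2^3), I_3 = (x_0, x_1^4, x_1^3x_2, x_1^3x_3, x_1^3x_4, x_1^2x_2^2, x_1^2x_2x_3^2, x_1^2x_2x_3x_4), I_4 = (x_0, x_1^4, x_1^3x_2, x_1^3x_3, x_1^2x_2^2, x_1^2x_2x_3, x_1^3x_4^2), I_5 = (x_0^2, x_0x_1, x_0x_2, x_0x_3, x_0x_4, x_1^3, x_1^2x_2x_3^2, x_1^2x_2x_3x_4, x_1^2x_2^2), I_6 = (x_0^2, x_0x_1, x_0x_2, x_0x_3, x_0x_4, x_1^4, x_1^3x_2, x_1^3x_3, x_1^3x_4, x_1^2x_2^2, x_1^2x_2x_3), I_7 = (x_0^2, x_0x_1, x_0x_2, x_0x_3, x_0x_4^2, x_1^3,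 x_1^2x_2x_3, x_1^2x_2^2) of k[x_0,…,x_5], the double saturation sat_{x_4,x_5}(I_j) equals the ideal (x_0, x_1^3, x_1^2x_2^2, x_1^2x_2x_3) of k[x_0,…,x_3]. -/
open MvPolynomial

set_option maxHeartbeats 1600000

/-- The double saturation `sat_{x_4,x_5}` of an ideal of `k[x_0,…,x_5]`: the ideal of
`k[x_0,…,x_3]` generated by the image under the `k`-algebra map sending
`x_i ↦ x_i` for `i ≤ 3` and `x_4 ↦ 1`, `x_5 ↦ 1`. -/
noncomputable def doubleSat {k : Type*} [Field k]
    (J : Ideal (MvPolynomial (Fin 6) k)) : Ideal (MvPolynomial (Fin 4) k) :=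
  Ideal.map (aeval ![X 0, X 1, X 2, X 3, 1, 1] :
    MvPolynomial (Fin 6) k →ₐ[k] MvPolynomial (Fin 4) k) J

/-!
A monomial of `k[x_0,…,x_5]` becomes a monomial of `k[x_0,…,x_3]` under `x_4, x_5 ↦ 1`: its
exponent vector is truncated to the first four entries. So the double saturation of a monomial
ideal is the monomial ideal on the truncated exponents, and two monomial ideals agree as soon as
every generator of each is a multiple of a generator of the other, which is a finite componentwise
comparison of exponent vectors.
-/

section MonomialIdeal

variable (R : Type*) [CommSemiring R] {σ : Type*} [Fintype σ]

/-- The ideal generated by the monomials `∏ i, X i ^ e i` for `e ∈ E`. Exponents are plain functions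
in a `Finset`, rather than `Finsupp`s, so that comparing the generators of two explicitly given
monomial ideals is decidable by computation. -/
noncomputable def monomialIdeal (E : Finset (σ → ℕ)) : Ideal (MvPolynomial σ R) :=
  Ideal.span ((fun e ↦ ∏ i, X i ^ e i : (σ → ℕ) → MvPolynomial σ R) '' E)

variable {R} {E F : Finset (σ → ℕ)}

lemma prod_X_pow_dvd_prod_X_pow {e f : σ → ℕ} (h : e ≤ f) :
    (∏ i, X i ^ e i : MvPolynomial σ R) ∣ ∏ i, X i ^ f i :=
  Finset.prod_dvd_prod_of_dvd _ _ fun i _ ↦ pow_dvd_pow (X i) (h i)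

lemma monomialIdeal_le_monomialIdeal (h : ∀ e ∈ E, ∃ f ∈ F, f ≤ e) :
    monomialIdeal R E ≤ monomialIdeal R F := by
  refine Ideal.span_le.2 (Set.forall_mem_image.2 fun e he ↦ ?_)
  obtain ⟨f, hf, hfe⟩ := h e he
  exact Ideal.mem_of_dvd _ (prod_X_pow_dvd_prod_X_pow hfe)
    (Ideal.subset_span (Set.mem_image_of_mem _ hf))

lemma monomialIdeal_eq_monomialIdeal (hEF : ∀ e ∈ E, ∃ f ∈ F, f ≤ e)
    (hFE : ∀ f ∈ F, ∃ e ∈ E, e ≤ f) : monomialIdeal R E = monomialIdeal R F :=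
  (monomialIdeal_le_monomialIdeal hEF).antisymm (monomialIdeal_le_monomialIdeal hFE)

end MonomialIdeal

section DoubleSat

variable {k : Type*} [Field k]

lemma aeval_prod_X_pow_eq_prod_castAdd (e : Fin 6 → ℕ) :
    aeval (![X 0, X 1, X 2, X 3, 1, 1] : Fin 6 → MvPolynomial (Fin 4) k)
        (∏ i, X i ^ e i : MvPolynomial (Fin 6) k) =
      ∏ i : Fin 4, X i ^ e (i.castAdd 2) := by
  simp [Fin.prod_univ_six, Fin.prod_univ_four]

lemma doubleSat_monomialIdeal (E : Finset (Fin 6 → ℕ)) :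
    doubleSat (monomialIdeal k E) = monomialIdeal k (E.image (· ∘ Fin.castAdd 2)) := by
  simp only [doubleSat, monomialIdeal, Ideal.map_span, Finset.coe_image, Set.image_image,
    aeval_prod_X_pow_eq_prod_castAdd, Function.comp_apply]

-- Entrywise inequalities, since `≤` on functions has no `Decidable` instance.
lemma doubleSat_eq_monomialIdeal {J : Ideal (MvPolynomial (Fin 6) k)} {F : Finset (Fin 4 → ℕ)}
    (E : Finset (Fin 6 → ℕ)) (hJ : J = monomialIdeal k E)
    (hEF : ∀ e ∈ E, ∃ f ∈ F, ∀ i, f i ≤ e (i.castAdd 2))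
    (hFE : ∀ f ∈ F, ∃ e ∈ E, ∀ i, e (i.castAdd 2) ≤ f i) :
    doubleSat J = monomialIdeal k F := by
  rw [hJ, doubleSat_monomialIdeal]
  exact monomialIdeal_eq_monomialIdeal (Finset.forall_mem_image.2 hEF)
    fun f hf ↦ Finset.exists_mem_image.2 (hFE f hf)

/-- The exponents of `x_0, x_1^3, x_1^2x_2^2, x_1^2x_2x_3`, the generators of the double saturation
of the lexicographic ideal `I_1`. -/
def lexDoubleSatExponents : Finset (Fin 4 → ℕ) :=
  {![1, 0, 0, 0], ![0, 3, 0, 0], ![0, 2, 2, 0], ![0, 2, 1, 1]}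

lemma monomialIdeal_lexDoubleSatExponents :
    monomialIdeal k lexDoubleSatExponents =
      Ideal.span {X 0, X 1 ^ 3, X 1 ^ 2 * X 2 ^ 2, X 1 ^ 2 * X 2 * X 3} := by
  simp [monomialIdeal, lexDoubleSatExponents, Set.image_insert_eq, Fin.prod_univ_four]

end DoubleSat

theorem statement_15_general (k : Type*) [Field k]
    (I1 I2 I3 I4 I5 I6 I7 : Ideal (MvPolynomial (Fin 6) k))
    (hI1 : I1 = Ideal.span {X 0, X 1 ^ 3, X 1 ^ 2 * X 2 ^ 2, X 1 ^ 2 * X 2 * X 3 ^ 2,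
        X 1 ^ 2 * X 2 * X 3 * X 4 ^ 2})
    (hI2 : I2 = Ideal.span {X 0, X 1 ^ 3, X 1 ^ 2 * X 2 * X 3 * X 4, X 1 ^ 2 * X 2 ^ 2 * X 4,
        X 1 ^ 2 * X 2 * X 3 ^ 2, X 1 ^ 2 * X 2 ^ 2 * X 3, X 1 ^ 2 * X 2 ^ 3})
    (hI3 : I3 = Ideal.span {X 0, X 1 ^ 4, X 1 ^ 3 * X 2, X 1 ^ 3 * X 3, X 1 ^ 3 * X 4,
        X 1 ^ 2 * X 2 ^ 2, X 1 ^ 2 * X 2 * X 3 ^ 2, X 1 ^ 2 * X 2 * X 3 * X 4})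
    (hI4 : I4 = Ideal.span {X 0, X 1 ^ 4, X 1 ^ 3 * X 2, X 1 ^ 3 * X 3, X 1 ^ 2 * X 2 ^ 2,
        X 1 ^ 2 * X 2 * X 3, X 1 ^ 3 * X 4 ^ 2})
    (hI5 : I5 = Ideal.span {X 0 ^ 2, X 0 * X 1, X 0 * X 2, X 0 * X 3, X 0 * X 4, X 1 ^ 3,
        X 1 ^ 2 * X 2 * X 3 ^ 2, X 1 ^ 2 * X 2 * X 3 * X 4, X 1 ^ 2 * X 2 ^ 2})
    (hI6 : I6 = Ideal.span {X 0 ^ 2, X 0 * X 1, X 0 * X 2, X 0 * X 3, X 0 * X 4, X 1 ^ 4,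
        X 1 ^ 3 * X 2, X 1 ^ 3 * X 3, X 1 ^ 3 * X 4, X 1 ^ 2 * X 2 ^ 2, X 1 ^ 2 * X 2 * X 3})
    (hI7 : I7 = Ideal.span {X 0 ^ 2, X 0 * X 1, X 0 * X 2, X 0 * X 3, X 0 * X 4 ^ 2, X 1 ^ 3,
        X 1 ^ 2 * X 2 * X 3, X 1 ^ 2 * X 2 ^ 2}) :
    doubleSat I1 = Ideal.span {X 0, X 1 ^ 3, X 1 ^ 2 * X 2 ^ 2, X 1 ^ 2 * X 2 * X 3} ∧
      doubleSat I2 = Ideal.span {X 0, X 1 ^ 3, X 1 ^ 2 * X 2 ^ 2, X 1 ^ 2 * X 2 * X 3} ∧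
      doubleSat I3 = Ideal.span {X 0, X 1 ^ 3, X 1 ^ 2 * X 2 ^ 2, X 1 ^ 2 * X 2 * X 3} ∧
      doubleSat I4 = Ideal.span {X 0, X 1 ^ 3, X 1 ^ 2 * X 2 ^ 2, X 1 ^ 2 * X 2 * X 3} ∧
      doubleSat I5 = Ideal.span {X 0, X 1 ^ 3, X 1 ^ 2 * X 2 ^ 2, X 1 ^ 2 * X 2 * X 3} ∧
      doubleSat I6 = Ideal.span {X 0, X 1 ^ 3, X 1 ^ 2 * X 2 ^ 2, X 1 ^ 2 * X 2 * X 3} ∧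
      doubleSat I7 = Ideal.span {X 0, X 1 ^ 3, X 1 ^ 2 * X 2 ^ 2, X 1 ^ 2 * X 2 * X 3} := by
  rw [← monomialIdeal_lexDoubleSatExponents]
  refine ⟨?_, ?_, ?_, ?_, ?_, ?_, ?_⟩
  · exact doubleSat_eq_monomialIdeal
      {![1, 0, 0, 0, 0, 0], ![0, 3, 0, 0, 0, 0], ![0, 2, 2, 0, 0, 0], ![0, 2, 1, 2, 0, 0],
       ![0, 2, 1, 1, 2, 0]}
      (by simp [hI1, monomialIdeal, Set.image_insert_eq, Fin.prod_univ_six]) (by decide) (by decide)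
  · exact doubleSat_eq_monomialIdeal
      {![1, 0, 0, 0, 0, 0], ![0, 3, 0, 0, 0, 0], ![0, 2, 1, 1, 1, 0], ![0, 2, 2, 0, 1, 0],
       ![0, 2, 1, 2, 0, 0], ![0, 2, 2, 1, 0, 0], ![0, 2, 3, 0, 0, 0]}
      (by simp [hI2, monomialIdeal, Set.image_insert_eq, Fin.prod_univ_six]) (by decide) (by decide)
  · exact doubleSat_eq_monomialIdeal
      {![1, 0, 0, 0, 0, 0], ![0, 4, 0, 0, 0, 0], ![0, 3, 1, 0, 0, 0], ![0, 3, 0, 1, 0, 0],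
       ![0, 3, 0, 0, 1, 0], ![0, 2, 2, 0, 0, 0], ![0, 2, 1, 2, 0, 0], ![0, 2, 1, 1, 1, 0]}
      (by simp [hI3, monomialIdeal, Set.image_insert_eq, Fin.prod_univ_six]) (by decide) (by decide)
  · exact doubleSat_eq_monomialIdeal
      {![1, 0, 0, 0, 0, 0], ![0, 4, 0, 0, 0, 0], ![0, 3, 1, 0, 0, 0], ![0, 3, 0, 1, 0, 0],
       ![0, 2, 2, 0, 0, 0], ![0, 2, 1, 1, 0, 0], ![0, 3, 0, 0, 2, 0]}
      (by simp [hI4, monomialIdeal, Set.image_insert_eq, Fin.prod_univ_six]) (by decide) (by decide)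
  · exact doubleSat_eq_monomialIdeal
      {![2, 0, 0, 0, 0, 0], ![1, 1, 0, 0, 0, 0], ![1, 0, 1, 0, 0, 0], ![1, 0, 0, 1, 0, 0],
       ![1, 0, 0, 0, 1, 0], ![0, 3, 0, 0, 0, 0], ![0, 2, 1, 2, 0, 0], ![0, 2, 1, 1, 1, 0],
       ![0, 2, 2, 0, 0, 0]}
      (by simp [hI5, monomialIdeal, Set.image_insert_eq, Fin.prod_univ_six]) (by decide) (by decide)
  · exact doubleSat_eq_monomialIdeal
      {![2, 0, 0, 0, 0, 0], ![1, 1, 0, 0, 0, 0], ![1, 0, 1, 0, 0, 0], ![1, 0, 0, 1, 0, 0],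
       ![1, 0, 0, 0, 1, 0], ![0, 4, 0, 0, 0, 0], ![0, 3, 1, 0, 0, 0], ![0, 3, 0, 1, 0, 0],
       ![0, 3, 0, 0, 1, 0], ![0, 2, 2, 0, 0, 0], ![0, 2, 1, 1, 0, 0]}
      (by simp [hI6, monomialIdeal, Set.image_insert_eq, Fin.prod_univ_six]) (by decide) (by decide)
  · exact doubleSat_eq_monomialIdeal
      {![2, 0, 0, 0, 0, 0], ![1, 1, 0, 0, 0, 0], ![1, 0, 1, 0, 0, 0], ![1, 0, 0, 1, 0, 0],
       ![1, 0, 0, 0, 2, 0], ![0, 3, 0, 0, 0, 0], ![0, 2, 1, 1, 0, 0], ![0, 2, 2, 0, 0, 0]}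
      (by simp [hI7, monomialIdeal, Set.image_insert_eq, Fin.prod_univ_six]) (by decide) (by decide)

theorem statement_15 (k : Type*) [Field k] [CharZero k]
    (I1 I2 I3 I4 I5 I6 I7 : Ideal (MvPolynomial (Fin 6) k))
    (hI1 : I1 = Ideal.span {X 0, X 1 ^ 3, X 1 ^ 2 * X 2 ^ 2, X 1 ^ 2 * X 2 * X 3 ^ 2, X 1 ^ 2 * X 2 * X 3 * X 4 ^ 2})
    (hI2 : I2 = Ideal.span {X 0, X 1 ^ 3, X 1 ^ 2 * X 2 * X 3 * X 4, X 1 ^ 2 * X 2 ^ 2 * X 4, X 1 ^ 2 * X 2 * X 3 ^ 2, X 1 ^ 2 * X 2 ^ 2 * X 3, X 1 ^ 2 * X 2 ^ 3})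
    (hI3 : I3 = Ideal.span {X 0, X 1 ^ 4, X 1 ^ 3 * X 2, X 1 ^ 3 * X 3, X 1 ^ 3 * X 4, X 1 ^ 2 * X 2 ^ 2, X 1 ^ 2 * X 2 * X 3 ^ 2, X 1 ^ 2 * X 2 * X 3 * X 4})
    (hI4 : I4 = Ideal.span {X 0, X 1 ^ 4, X 1 ^ 3 * X 2, X 1 ^ 3 * X 3, X 1 ^ 2 * X 2 ^ 2, X 1 ^ 2 * X 2 * X 3, X 1 ^ 3 * X 4 ^ 2})
    (hI5 : I5 = Ideal.span {X 0 ^ 2, X 0 * X 1, X 0 * X 2, X 0 * X 3, X 0 * X 4, X 1 ^ 3, X 1 ^ 2 * X 2 * X 3 ^ 2, X 1 ^ 2 * X 2 * X 3 * X 4, X 1 ^ 2 * X 2 ^ 2})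
    (hI6 : I6 = Ideal.span {X 0 ^ 2, X 0 * X 1, X 0 * X 2, X 0 * X 3, X 0 * X 4, X 1 ^ 4, X 1 ^ 3 * X 2, X 1 ^ 3 * X 3, X 1 ^ 3 * X 4, X 1 ^ 2 * X 2 ^ 2, X 1 ^ 2 * X 2 * X 3})
    (hI7 : I7 = Ideal.span {X 0 ^ 2, X 0 * X 1, X 0 * X 2, X 0 * X 3, X 0 * X 4 ^ 2, X 1 ^ 3, X 1 ^ 2 * X 2 * X 3, X 1 ^ 2 * X 2 ^ 2}) :
    doubleSat I1 = Ideal.span {X 0, X 1 ^ 3, X 1 ^ 2 * X 2 ^ 2, X 1 ^ 2 * X 2 * X 3} ∧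
      doubleSat I2 = Ideal.span {X 0, X 1 ^ 3, X 1 ^ 2 * X 2 ^ 2, X 1 ^ 2 * X 2 * X 3} ∧
      doubleSat I3 = Ideal.span {X 0, X 1 ^ 3, X 1 ^ 2 * X 2 ^ 2, X 1 ^ 2 * X 2 * X 3} ∧
      doubleSat I4 = Ideal.span {X 0, X 1 ^ 3, X 1 ^ 2 * X 2 ^ 2, X 1 ^ 2 * X 2 * X 3} ∧
      doubleSat I5 = Ideal.span {X 0, X 1 ^ 3, X 1 ^ 2 * X 2 ^ 2, X 1 ^ 2 * X 2 * X 3} ∧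
      doubleSat I6 = Ideal.span {X 0, X 1 ^ 3, X 1 ^ 2 * X 2 ^ 2, X 1 ^ 2 * X 2 * X 3} ∧
      doubleSat I7 = Ideal.span {X 0, X 1 ^ 3, X 1 ^ 2 * X 2 ^ 2, X 1 ^ 2 * X 2 * X 3} :=
  statement_15_general k I1 I2 I3 I4 I5 I6 I7 hI1 hI2 hI3 hI4 hI5 hI6 hI7
end

section
/- Let k be a field of characteristic zero. For the ideals I_8 = (x_0^2, x_0x_1, x_0x_2, x_0x_3, x_1^3, x_1^2x_2) and I_9 = (x_0^2, x_0x_1, x_0x_2, x_1^2) of k[x_0,…,x_5], the double saturations are sat_{x_4,x_5}(I_8) = (x_0^2, x_0x_1, x_0x_2, x_0x_3, x_1^3, x_1^2x_2) and sat_{x_4,x_5}(I_9) = (x_0^2, x_0x_1, x_0x_2, x_1^2) as ideals of k[x_0,…,x_3], and neither of these equals the double saturation (x_0, x_1^3, x_1^2x_2^2, x_1^2x_2x_3) of the lexicographic ideal I_1 = (x_0, x_1^3, x_1^2x_2^2, x_1^2x_2x_3^2, x_1^2x_2x_3x_4^2). -/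
/-!
`I₈` and `I₉` are extended from `k[x_0,…,x_3]`, so the double saturation returns the ideals they
are extended from. These have all their generators in degree at least two, hence lie in the square
of the irrelevant ideal, while the double saturation of the lexicographic ideal contains `x_0`.
-/

open MvPolynomial

section IdealOfVars

variable {σ R : Type*} [CommSemiring R] [Nontrivial R]

theorem X_mem_idealOfVars_pow_iff {i : σ} {n : ℕ} :
    (X i : MvPolynomial σ R) ∈ idealOfVars σ R ^ n ↔ n ≤ 1 := by
  simp [X, monomial_mem_pow_idealOfVars_iff]

theorem ne_of_le_idealOfVars_sq_of_X_mem {I J : Ideal (MvPolynomial σ R)} {i : σ}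
    (hI : I ≤ idealOfVars σ R ^ 2) (hJ : X i ∈ J) : I ≠ J := by
  rintro rfl
  exact absurd (X_mem_idealOfVars_pow_iff.1 (hI hJ)) (by decide)

end IdealOfVars

section DoubleSat

variable {k : Type*} [Field k]

theorem doubleSat_map_rename_castAdd (J : Ideal (MvPolynomial (Fin 4) k)) :
    doubleSat (J.map (rename (Fin.castAdd 2) :
      MvPolynomial (Fin 4) k →ₐ[k] MvPolynomial (Fin 6) k)) = J := by
  have retraction : (aeval ![X 0, X 1, X 2, X 3, 1, 1] :
      MvPolynomial (Fin 6) k →ₐ[k] MvPolynomial (Fin 4) k).comp (rename (Fin.castAdd 2)) =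
      AlgHom.id k _ := by
    ext i : 1
    fin_cases i <;> simp
  rw [doubleSat, Ideal.map_mapₐ, retraction]
  exact Ideal.map_id J

theorem doubleSat_lexIdeal :
    doubleSat (Ideal.span {X 0, X 1 ^ 3, X 1 ^ 2 * X 2 ^ 2, X 1 ^ 2 * X 2 * X 3 ^ 2,
      X 1 ^ 2 * X 2 * X 3 * X 4 ^ 2} : Ideal (MvPolynomial (Fin 6) k)) =
      Ideal.span {X 0, X 1 ^ 3, X 1 ^ 2 * X 2 ^ 2, X 1 ^ 2 * X 2 * X 3} := by
  have redundant : (X 1 ^ 2 * X 2 * X 3 : MvPolynomial (Fin 4) k) ∣ X 1 ^ 2 * X 2 * X 3 ^ 2 :=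
    mul_dvd_mul_left _ (dvd_pow_self _ two_ne_zero)
  rw [doubleSat, Ideal.map_span]
  simp [Set.image_insert_eq, Ideal.span_insert,
    sup_eq_right.2 (Ideal.span_singleton_le_span_singleton.2 redundant)]

end DoubleSat

theorem statement_16_general (k : Type*) [Field k]
    (I₁ I₈ I₉ : Ideal (MvPolynomial (Fin 6) k))
    (hI₁ : I₁ = Ideal.span {X 0, X 1 ^ 3, X 1 ^ 2 * X 2 ^ 2, X 1 ^ 2 * X 2 * X 3 ^ 2,
      X 1 ^ 2 * X 2 * X 3 * X 4 ^ 2})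
    (hI₈ : I₈ = Ideal.span {X 0 ^ 2, X 0 * X 1, X 0 * X 2, X 0 * X 3, X 1 ^ 3, X 1 ^ 2 * X 2})
    (hI₉ : I₉ = Ideal.span {X 0 ^ 2, X 0 * X 1, X 0 * X 2, X 1 ^ 2}) :
    doubleSat I₈ = Ideal.span {X 0 ^ 2, X 0 * X 1, X 0 * X 2, X 0 * X 3, X 1 ^ 3, X 1 ^ 2 * X 2} ∧
      doubleSat I₉ = Ideal.span {X 0 ^ 2, X 0 * X 1, X 0 * X 2, X 1 ^ 2} ∧
      doubleSat I₁ = Ideal.span {X 0, X 1 ^ 3, X 1 ^ 2 * X 2 ^ 2, X 1 ^ 2 * X 2 * X 3} ∧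
      doubleSat I₈ ≠ Ideal.span {X 0, X 1 ^ 3, X 1 ^ 2 * X 2 ^ 2, X 1 ^ 2 * X 2 * X 3} ∧
      doubleSat I₉ ≠ Ideal.span {X 0, X 1 ^ 3, X 1 ^ 2 * X 2 ^ 2, X 1 ^ 2 * X 2 * X 3} := by
  have sat₈ : doubleSat I₈ =
      Ideal.span {X 0 ^ 2, X 0 * X 1, X 0 * X 2, X 0 * X 3, X 1 ^ 3, X 1 ^ 2 * X 2} := by
    refine .trans ?_ (doubleSat_map_rename_castAdd _)
    simp [hI₈, Ideal.map_span, Set.image_insert_eq]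
  have sat₉ : doubleSat I₉ = Ideal.span {X 0 ^ 2, X 0 * X 1, X 0 * X 2, X 1 ^ 2} := by
    refine .trans ?_ (doubleSat_map_rename_castAdd _)
    simp [hI₉, Ideal.map_span, Set.image_insert_eq]
  have X_zero_mem : (X 0 : MvPolynomial (Fin 4) k) ∈
      Ideal.span {X 0, X 1 ^ 3, X 1 ^ 2 * X 2 ^ 2, X 1 ^ 2 * X 2 * X 3} :=
    Ideal.subset_span (Set.mem_insert _ _)
  have le₈ : doubleSat I₈ ≤ idealOfVars (Fin 4) k ^ 2 := by
    simp [sat₈, Ideal.span_le, Set.insert_subset_iff, X, monomial_pow, monomial_mul,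
      monomial_mem_pow_idealOfVars_iff]
  have le₉ : doubleSat I₉ ≤ idealOfVars (Fin 4) k ^ 2 := by
    simp [sat₉, Ideal.span_le, Set.insert_subset_iff, X, monomial_pow, monomial_mul,
      monomial_mem_pow_idealOfVars_iff]
  exact ⟨sat₈, sat₉, hI₁ ▸ doubleSat_lexIdeal,
    ne_of_le_idealOfVars_sq_of_X_mem le₈ X_zero_mem,
    ne_of_le_idealOfVars_sq_of_X_mem le₉ X_zero_mem⟩

theorem statement_16 (k : Type*) [Field k] [CharZero k]
    (I₁ I₈ I₉ : Ideal (MvPolynomial (Fin 6) k))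
    (hI₁ : I₁ = Ideal.span {X 0, X 1 ^ 3, X 1 ^ 2 * X 2 ^ 2, X 1 ^ 2 * X 2 * X 3 ^ 2, X 1 ^ 2 * X 2 * X 3 * X 4 ^ 2})
    (hI₈ : I₈ = Ideal.span {X 0 ^ 2, X 0 * X 1, X 0 * X 2, X 0 * X 3, X 1 ^ 3, X 1 ^ 2 * X 2})
    (hI₉ : I₉ = Ideal.span {X 0 ^ 2, X 0 * X 1, X 0 * X 2, X 1 ^ 2}) :
    doubleSat I₈ = Ideal.span {X 0 ^ 2, X 0 * X 1, X 0 * X 2, X 0 * X 3, X 1 ^ 3, X 1 ^ 2 * X 2} ∧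
      doubleSat I₉ = Ideal.span {X 0 ^ 2, X 0 * X 1, X 0 * X 2, X 1 ^ 2} ∧
      doubleSat I₁ = Ideal.span {X 0, X 1 ^ 3, X 1 ^ 2 * X 2 ^ 2, X 1 ^ 2 * X 2 * X 3} ∧
      doubleSat I₈ ≠ Ideal.span {X 0, X 1 ^ 3, X 1 ^ 2 * X 2 ^ 2, X 1 ^ 2 * X 2 * X 3} ∧
      doubleSat I₉ ≠ Ideal.span {X 0, X 1 ^ 3, X 1 ^ 2 * X 2 ^ 2, X 1 ^ 2 * X 2 * X 3} := by
  exact statement_16_general k I₁ I₈ I₉ hI₁ hI₈ hI₉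
end
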